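/- A Banach algebra A with a bounded approximate identity is approximately amenable if and only if it is pseudo-amenable. -/

import Mathlib

open Filter Topology TensorProduct

noncomputable section


open Filter Topology TensorProduct


/-! Banach bimodules and derivations -/

variable (A : Type) [NonUnitalNormedRing A] [NormedSpace ℂ A]
  [IsScalarTower ℂ A A] [SMulCommClass ℂ A A]

/-- A Banach `A`-bimodule structure on a Banach space `X`: `l a` is the left action of `a`,
`r a` is the right action of `a`. -/
structure BanachBimod (X : Type) [NormedAddCommGroup X] [NormedSpace ℂ X] where
  l : A → X →L[ℂ] X
  r : A → X →L[ℂ] X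
  l_add : ∀ a b, l (a + b) = l a + l b
  l_smul : ∀ (c : ℂ) a, l (c • a) = c • l a
  r_add : ∀ a b, r (a + b) = r a + r b
  r_smul : ∀ (c : ℂ) a, r (c • a) = c • r a
  l_bound : ∃ C : ℝ, ∀ a, ‖l a‖ ≤ C * ‖a‖
  r_bound : ∃ C : ℝ, ∀ a, ‖r a‖ ≤ C * ‖a‖
  l_mul : ∀ a b, l (a * b) = (l a).comp (l b)
  r_mul : ∀ a b, r (a * b) = (r b).comp (r a)
  lr_comm : ∀ a b, (l a).comp (r b) = (r b).comp (l a)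

variable {A}

namespace BanachBimod

variable {X : Type} [NormedAddCommGroup X] [NormedSpace ℂ X]

/-- The dual bimodule structure on `X →L[ℂ] ℂ`. -/
def dual (M : BanachBimod A X) : BanachBimod A (X →L[ℂ] ℂ) where
  l a := (ContinuousLinearMap.compL ℂ X X ℂ).flip (M.r a)
  r a := (ContinuousLinearMap.compL ℂ X X ℂ).flip (M.l a)
  l_add a b := by simp only [M.r_add, map_add]
  l_smul c a := by simp only [M.r_smul, map_smul]
  r_add a b := by simp only [M.l_add, map_add]
  r_smul c a := by simp only [M.l_smul, map_smul]
  l_bound := by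
    obtain ⟨C, hC⟩ := M.r_bound
    refine ⟨‖(ContinuousLinearMap.compL ℂ X X ℂ).flip‖ * C, fun a => ?_⟩
    calc ‖(ContinuousLinearMap.compL ℂ X X ℂ).flip (M.r a)‖
        ≤ ‖(ContinuousLinearMap.compL ℂ X X ℂ).flip‖ * ‖M.r a‖ :=
          (ContinuousLinearMap.compL ℂ X X ℂ).flip.le_opNorm _
      _ ≤ ‖(ContinuousLinearMap.compL ℂ X X ℂ).flip‖ * (C * ‖a‖) := by
          exact mul_le_mul_of_nonneg_left (hC a) (norm_nonneg _)
      _ = ‖(ContinuousLinearMap.compL ℂ X X ℂ).flip‖ * C * ‖a‖ := by ring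
  r_bound := by
    obtain ⟨C, hC⟩ := M.l_bound
    refine ⟨‖(ContinuousLinearMap.compL ℂ X X ℂ).flip‖ * C, fun a => ?_⟩
    calc ‖(ContinuousLinearMap.compL ℂ X X ℂ).flip (M.l a)‖
        ≤ ‖(ContinuousLinearMap.compL ℂ X X ℂ).flip‖ * ‖M.l a‖ :=
          (ContinuousLinearMap.compL ℂ X X ℂ).flip.le_opNorm _
      _ ≤ ‖(ContinuousLinearMap.compL ℂ X X ℂ).flip‖ * (C * ‖a‖) := by
          exact mul_le_mul_of_nonneg_left (hC a) (norm_nonneg _)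
      _ = ‖(ContinuousLinearMap.compL ℂ X X ℂ).flip‖ * C * ‖a‖ := by ring
  l_mul a b := by
    ext φ x
    simp [M.r_mul]
  r_mul a b := by
    ext φ x
    simp [M.l_mul]
  lr_comm a b := by
    ext φ x
    simpa using congrArg φ (congrFun (congrArg DFunLike.coe (M.lr_comm b a)) x)

/-- A continuous derivation from `A` into the bimodule `X`. -/
def IsDerivation (M : BanachBimod A X) (D : A →L[ℂ] X) : Prop :=
  ∀ a b, D (a * b) = M.l a (D b) + M.r b (D a)

/-- `D` is inner. -/
def Inner (M : BanachBimod A X) (D : A →L[ℂ] X) : Prop :=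
  ∃ x : X, ∀ a, D a = M.l a x - M.r a x

/-- `D` is approximately inner: some net of inner derivations converges to `D` pointwise
in norm. -/
def ApproxInner (M : BanachBimod A X) (D : A →L[ℂ] X) : Prop :=
  ∃ (ι : Type) (φ : Filter ι) (x : ι → X), φ.NeBot ∧
    ∀ a, Tendsto (fun i => M.l a (x i) - M.r a (x i)) φ (𝓝 (D a))

/-- `D` is sequentially approximately inner. -/
def SeqApproxInner (M : BanachBimod A X) (D : A →L[ℂ] X) : Prop :=
  ∃ x : ℕ → X, ∀ a, Tendsto (fun n => M.l a (x n) - M.r a (x n)) atTop (𝓝 (D a))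

/-- `D` is boundedly approximately inner: the approximating net of inner derivations is
bounded as a net of operators from `A` to `X`. -/
def BddApproxInner (M : BanachBimod A X) (D : A →L[ℂ] X) : Prop :=
  ∃ (ι : Type) (φ : Filter ι) (x : ι → X), φ.NeBot ∧
    (∃ C : ℝ, ∀ i a, ‖M.l a (x i) - M.r a (x i)‖ ≤ C * ‖a‖) ∧
    ∀ a, Tendsto (fun i => M.l a (x i) - M.r a (x i)) φ (𝓝 (D a))

/-- `D` is uniformly approximately inner: inner derivations approximate `D` uniformly
on the unit ball of `A`, i.e. in operator norm. -/
def UnifApproxInner (M : BanachBimod A X) (D : A →L[ℂ] X) : Prop :=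
  ∃ (ι : Type) (φ : Filter ι) (x : ι → X), φ.NeBot ∧
    ∀ ε > (0 : ℝ), ∀ᶠ i in φ, ∀ a, ‖D a - (M.l a (x i) - M.r a (x i))‖ ≤ ε * ‖a‖

/-- A derivation into the dual module `X →L[ℂ] ℂ` is weak* approximately inner. -/
def WeakStarApproxInner (M : BanachBimod A X) (D : A →L[ℂ] (X →L[ℂ] ℂ)) : Prop :=
  ∃ (ι : Type) (φ : Filter ι) (x : ι → (X →L[ℂ] ℂ)), φ.NeBot ∧
    ∀ (a : A) (ξ : X),
      Tendsto (fun i => (M.dual.l a (x i) - M.dual.r a (x i)) ξ) φ (𝓝 (D a ξ))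

end BanachBimod

variable (A)

/-- `A` is contractible: every continuous derivation into every Banach `A`-bimodule is inner. -/
def Contractible : Prop :=
  ∀ (X : Type) (_ : NormedAddCommGroup X) (_ : NormedSpace ℂ X) (M : BanachBimod A X)
    (D : A →L[ℂ] X), M.IsDerivation D → M.Inner D

def ApproximatelyContractible : Prop :=
  ∀ (X : Type) (_ : NormedAddCommGroup X) (_ : NormedSpace ℂ X) (M : BanachBimod A X)
    (D : A →L[ℂ] X), M.IsDerivation D → M.ApproxInner D

def SeqApproximatelyContractible : Prop :=
  ∀ (X : Type) (_ : NormedAddCommGroup X) (_ : NormedSpace ℂ X) (M : BanachBimod A X)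
    (D : A →L[ℂ] X), M.IsDerivation D → M.SeqApproxInner D

def UnifApproximatelyContractible : Prop :=
  ∀ (X : Type) (_ : NormedAddCommGroup X) (_ : NormedSpace ℂ X) (M : BanachBimod A X)
    (D : A →L[ℂ] X), M.IsDerivation D → M.UnifApproxInner D

def ApproximatelyAmenable : Prop :=
  ∀ (X : Type) (_ : NormedAddCommGroup X) (_ : NormedSpace ℂ X) (M : BanachBimod A X)
    (D : A →L[ℂ] (X →L[ℂ] ℂ)), M.dual.IsDerivation D → M.dual.ApproxInner D

def SeqApproximatelyAmenable : Prop :=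
  ∀ (X : Type) (_ : NormedAddCommGroup X) (_ : NormedSpace ℂ X) (M : BanachBimod A X)
    (D : A →L[ℂ] (X →L[ℂ] ℂ)), M.dual.IsDerivation D → M.dual.SeqApproxInner D

def BddApproximatelyAmenable : Prop :=
  ∀ (X : Type) (_ : NormedAddCommGroup X) (_ : NormedSpace ℂ X) (M : BanachBimod A X)
    (D : A →L[ℂ] (X →L[ℂ] ℂ)), M.dual.IsDerivation D → M.dual.BddApproxInner D

def WeakStarApproximatelyAmenable : Prop :=
  ∀ (X : Type) (_ : NormedAddCommGroup X) (_ : NormedSpace ℂ X) (M : BanachBimod A X)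
    (D : A →L[ℂ] (X →L[ℂ] ℂ)), M.dual.IsDerivation D → M.WeakStarApproxInner D


/-- The projective tensor "seminorm" on the algebraic tensor product `V ⊗[ℂ] W`, relative to
given (semi)norm functions on the factors: the infimum of `∑ να aₙ * νβ bₙ` over all
representations `t = ∑ aₙ ⊗ bₙ`. -/
def projTensorSN {V W : Type} [AddCommGroup V] [Module ℂ V] [AddCommGroup W] [Module ℂ W]
    (να : V → ℝ) (νβ : W → ℝ) (t : V ⊗[ℂ] W) : ℝ :=
  sInf {r : ℝ | ∃ L : List (V × W), t = (L.map fun p => p.1 ⊗ₜ[ℂ] p.2).sum ∧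
      r = (L.map fun p => να p.1 * νβ p.2).sum}

section SN

variable (C : Type) [NonUnitalRing C] [Module ℂ C] [IsScalarTower ℂ C C] [SMulCommClass ℂ C C]

/-- The left action `u ↦ a·u` of `C` on `C ⊗[ℂ] C`. -/
def tactL (a : C) : C ⊗[ℂ] C →ₗ[ℂ] C ⊗[ℂ] C :=
  TensorProduct.map (LinearMap.mulLeft ℂ a) LinearMap.id

/-- The right action `u ↦ u·a` of `C` on `C ⊗[ℂ] C`. -/
def tactR (a : C) : C ⊗[ℂ] C →ₗ[ℂ] C ⊗[ℂ] C :=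
  TensorProduct.map LinearMap.id (LinearMap.mulRight ℂ a)

/-- The multiplication map `π : C ⊗ C → C`. -/
def tpi : C ⊗[ℂ] C →ₗ[ℂ] C := LinearMap.mul' ℂ C

variable (ν : C → ℝ)

/-- Pseudo-amenability of the algebra `C` relative to the (semi)norm function `ν`:
there is an approximate diagonal, i.e. a net `(u_i) ⊂ C ⊗̂ C` with
`a·u_i − u_i·a → 0` (in the projective tensor seminorm) and `π(u_i)a → a` for all `a ∈ C`. -/
def PseudoAmenableSN : Prop :=
  ∃ (ι : Type) (φ : Filter ι) (u : ι → C ⊗[ℂ] C), φ.NeBot ∧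
    (∀ a : C, Tendsto (fun i => projTensorSN ν ν (tactL C a (u i) - tactR C a (u i))) φ (𝓝 0)) ∧
    (∀ a : C, Tendsto (fun i => ν (tpi C (u i) * a - a)) φ (𝓝 0))

/-- Sequential pseudo-amenability. -/
def SeqPseudoAmenableSN : Prop :=
  ∃ u : ℕ → C ⊗[ℂ] C,
    (∀ a : C, Tendsto (fun n => projTensorSN ν ν (tactL C a (u n) - tactR C a (u n))) atTop (𝓝 0)) ∧
    (∀ a : C, Tendsto (fun n => ν (tpi C (u n) * a - a)) atTop (𝓝 0))

/-- Pseudo-contractibility: there is a central approximate diagonal. -/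
def PseudoContractibleSN : Prop :=
  ∃ (ι : Type) (φ : Filter ι) (u : ι → C ⊗[ℂ] C), φ.NeBot ∧
    (∀ (a : C) i, tactL C a (u i) = tactR C a (u i)) ∧
    (∀ a : C, Tendsto (fun i => ν (tpi C (u i) * a - a)) φ (𝓝 0))

/-- Bounded pseudo-contractibility: a central approximate diagonal `(u_i)` such that
`(π(u_i))` is a multiplier-bounded approximate identity. -/
def BddPseudoContractibleSN : Prop :=
  ∃ (ι : Type) (φ : Filter ι) (u : ι → C ⊗[ℂ] C), φ.NeBot ∧
    (∀ (a : C) i, tactL C a (u i) = tactR C a (u i)) ∧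
    (∀ a : C, Tendsto (fun i => ν (tpi C (u i) * a - a)) φ (𝓝 0)) ∧
    (∃ K : ℝ, 0 < K ∧ ∀ i (a : C), ν (tpi C (u i) * a) ≤ K * ν a)

end SN

section Normed

variable (A : Type) [NonUnitalNormedRing A] [NormedSpace ℂ A]
  [IsScalarTower ℂ A A] [SMulCommClass ℂ A A]

def PseudoAmenable : Prop := PseudoAmenableSN A (fun a => ‖a‖)
def SeqPseudoAmenable : Prop := SeqPseudoAmenableSN A (fun a => ‖a‖)
def PseudoContractible : Prop := PseudoContractibleSN A (fun a => ‖a‖)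
def BddPseudoContractible : Prop := BddPseudoContractibleSN A (fun a => ‖a‖)

/-- `A` has a (two-sided) approximate identity. -/
def HasApproxIdentity : Prop :=
  ∃ (ι : Type) (φ : Filter ι) (e : ι → A), φ.NeBot ∧
    ∀ a : A, Tendsto (fun i => e i * a) φ (𝓝 a) ∧ Tendsto (fun i => a * e i) φ (𝓝 a)

/-- `A` has a bounded (two-sided) approximate identity. -/
def HasBoundedApproxIdentity : Prop :=
  ∃ (ι : Type) (φ : Filter ι) (e : ι → A), φ.NeBot ∧ (∃ C : ℝ, ∀ i, ‖e i‖ ≤ C) ∧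
    ∀ a : A, Tendsto (fun i => e i * a) φ (𝓝 a) ∧ Tendsto (fun i => a * e i) φ (𝓝 a)

/-- `A` has a left approximate identity. -/
def HasLeftApproxIdentity : Prop :=
  ∃ (ι : Type) (φ : Filter ι) (e : ι → A), φ.NeBot ∧
    ∀ a : A, Tendsto (fun i => e i * a) φ (𝓝 a)

/-- `A` has a right approximate identity. -/
def HasRightApproxIdentity : Prop :=
  ∃ (ι : Type) (φ : Filter ι) (e : ι → A), φ.NeBot ∧
    ∀ a : A, Tendsto (fun i => a * e i) φ (𝓝 a)

/-- `A` has a central approximate identity. -/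
def HasCentralApproxIdentity : Prop :=
  ∃ (ι : Type) (φ : Filter ι) (e : ι → A), φ.NeBot ∧
    (∀ (a : A) i, a * e i = e i * a) ∧
    ∀ a : A, Tendsto (fun i => e i * a) φ (𝓝 a)

/-- `A` is approximately biprojective: there is a net `(T_α)` of bounded `A`-bimodule morphisms
`A → A ⊗̂ A` with `π ∘ T_α (a) → a` for every `a`. -/
def ApproxBiprojective : Prop :=
  ∃ (ι : Type) (φ : Filter ι) (T : ι → (A →ₗ[ℂ] A ⊗[ℂ] A)), φ.NeBot ∧
    (∀ i, ∃ C : ℝ, ∀ a, projTensorSN (fun x : A => ‖x‖) (fun x : A => ‖x‖) (T i a) ≤ C * ‖a‖) ∧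
    (∀ i (a b : A), T i (a * b) = tactL A a (T i b) ∧ T i (a * b) = tactR A b (T i a)) ∧
    (∀ a : A, Tendsto (fun i => tpi A (T i a)) φ (𝓝 a))

end Normed


end

/-!
By the Hahn–Banach theorem, a point `w` of a product of normed spaces is a limit of values of a
linear map `T` unless some functional with finitely many nonzero components vanishes on the range
of `T` but not at `w`. Both implications reduce to showing that such a functional does not exist.

Let `A` be pseudo-amenable and let `D : A → X` be a derivation. Suppose that the functionals `f a`
kill all inner derivations, in the sense that `∑ f a (a · x - x · a) = 0` for all `x`. Evaluate them
at `a · p - p · a`, where `p` is the image of the approximate diagonal `u` under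
`x ⊗ y ↦ x · D y`. Up to a term tending to zero this gives `∑ f a (D a) = k (D (π u))` in the limit,
where `k = ∑ f a · a = ∑ a · f a`. The bounded approximate identity acts on `k` from both sides, so
`k` factorizes as `b · k' · c` by Cohen's theorem, and the derivation property then
yields `k (D (π u)) → 0`.

Conversely, let `A` be approximately amenable. A functional that separates the family of pairs
`(0, a)` from the families `(a · u - u · a, π u * a)` consists of bilinear forms `f a` and
functionals `g a` such that `∑ (a · f a - f a · a)` is the balanced form
`(x, y) ↦ ∑ g a (x * y * a)`. A weak-* cluster point `E` of the bounded approximate identity gives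
the functional `E ⊗ E` on bilinear forms, and `a ↦ a · (E ⊗ E) - (E ⊗ E) · a` vanishes on balanced
forms. It is therefore a derivation into the dual of the quotient by these. As it is approximately
inner, it kills `∑ a · f a - f a · a`, and evaluating `E ⊗ E` there gives `∑ g a a = 0`.
-/

noncomputable section

section HahnBanach

variable {𝕜 : Type*} [RCLike 𝕜]

theorem exists_dual_eq_zero_and_ne_zero_of_notMem_closure {E : Type*} [AddCommGroup E] [Module 𝕜 E]
    [TopologicalSpace E] [IsTopologicalAddGroup E] [Module ℝ E] [IsScalarTower ℝ 𝕜 E]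
    [ContinuousSMul 𝕜 E] [LocallyConvexSpace ℝ E] {S : Submodule 𝕜 E} {z : E}
    (hz : z ∉ closure (S : Set E)) : ∃ f : E →L[𝕜] 𝕜, (∀ s ∈ S, f s = 0) ∧ f z ≠ 0 := by
  have : ContinuousSMul ℝ E := IsScalarTower.continuousSMul 𝕜
  obtain ⟨f, u, hfS, hfz⟩ := RCLike.geometric_hahn_banach_closed_point (𝕜 := 𝕜)
    (S.restrictScalars ℝ).convex.closure isClosed_closure hz
  have hlt : ∀ s ∈ S, RCLike.re (f s) < u := fun s hs => hfS s (subset_closure hs)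
  have hu : 0 < u := by simpa using hlt 0 S.zero_mem
  have hre : ∀ s ∈ S, RCLike.re (f s) = 0 := by
    intro s hs
    by_contra hne
    have := hlt (((u / RCLike.re (f s) : ℝ) : 𝕜) • s) (S.smul_mem _ hs)
    rw [map_smul, smul_eq_mul, RCLike.re_ofReal_mul, div_mul_cancel₀ _ hne] at this
    exact lt_irrefl _ this
  refine ⟨f, fun s hs => ?_, fun h => (hu.trans hfz).ne' (by simp [h])⟩
  have := hre (starRingEnd 𝕜 (f s) • s) (S.smul_mem _ hs)
  rwa [map_smul, smul_eq_mul, RCLike.conj_mul, ← RCLike.ofReal_pow, RCLike.ofReal_re,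
    sq_eq_zero_iff, norm_eq_zero] at this

theorem exists_finset_dual_pi_eq_sum {ι : Type*} [DecidableEq ι] {E : ι → Type*}
    [∀ i, AddCommGroup (E i)] [∀ i, Module 𝕜 (E i)] [∀ i, TopologicalSpace (E i)]
    (Λ : (∀ i, E i) →L[𝕜] 𝕜) :
    ∃ F : Finset ι, ∀ v, Λ v = ∑ i ∈ F, Λ (Pi.single i (v i)) := by
  have hball : Λ ⁻¹' Metric.ball 0 1 ∈ 𝓝 (0 : ∀ i, E i) :=
    Λ.continuous.continuousAt.preimage_mem_nhds <| by
      simpa using Metric.ball_mem_nhds (0 : 𝕜) one_pos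
  rw [nhds_pi, Filter.mem_pi'] at hball
  obtain ⟨F, t, ht, hsub⟩ := hball
  have hzero : ∀ v, (∀ i ∈ F, v i = 0) → Λ v = 0 := by
    intro v hv
    by_contra hne
    have hmem : (Λ v)⁻¹ • v ∈ Λ ⁻¹' Metric.ball 0 1 := hsub fun i hi => by
      simpa [hv i hi] using mem_of_mem_nhds (ht i)
    simp [hne] at hmem
  refine ⟨F, fun v => ?_⟩
  have := hzero (v - ∑ i ∈ F, Pi.single i (v i)) fun j hj => by
    simp [Finset.sum_apply, Finset.sum_pi_single, hj]
  rwa [map_sub, map_sum, sub_eq_zero] at this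

theorem exists_filter_tendsto_of_forall_dual {ι V : Type*} {E : ι → Type*} [AddCommGroup V]
    [Module 𝕜 V] [∀ i, SeminormedAddCommGroup (E i)] [∀ i, NormedSpace 𝕜 (E i)]
    (T : ∀ i, V →ₗ[𝕜] E i) (w : ∀ i, E i)
    (h : ∀ (F : Finset ι) (Λ : ∀ i, E i →L[𝕜] 𝕜),
      (∀ v, ∑ i ∈ F, Λ i (T i v) = 0) → ∑ i ∈ F, Λ i (w i) = 0) :
    ∃ φ : Filter V, φ.NeBot ∧ ∀ i, Tendsto (T i) φ (𝓝 (w i)) := by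
  classical
  let _ : ∀ i, NormedSpace ℝ (E i) := fun i => NormedSpace.restrictScalars ℝ 𝕜 (E i)
  have : ∀ i, IsScalarTower ℝ 𝕜 (E i) := fun i => RestrictScalars.isScalarTower ℝ 𝕜 (E i)
  have hw : w ∈ closure (LinearMap.range (LinearMap.pi T) : Set (∀ i, E i)) := by
    by_contra hw
    obtain ⟨Λ, hrange, hne⟩ := exists_dual_eq_zero_and_ne_zero_of_notMem_closure hw
    obtain ⟨F, hF⟩ := exists_finset_dual_pi_eq_sum Λ
    refine hne ((hF w).trans (h F (fun i => Λ.comp (.single 𝕜 E i)) fun v => ?_))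
    simpa using (hF (LinearMap.pi T v)).symm.trans (hrange _ ⟨v, rfl⟩)
  refine ⟨comap (LinearMap.pi T) (𝓝 w),
    comap_neBot_iff_frequently.2 (mem_closure_iff_frequently.1 hw), fun i => ?_⟩
  exact ((continuous_apply i).tendsto w).comp tendsto_comap

end HahnBanach

section CohenFactorization

variable {𝕜 A Y : Type*} [NormedAddCommGroup Y] [CompleteSpace Y]

theorem exists_sub_apply_eq_of_norm_le_half [NontriviallyNormedField 𝕜] [NormedSpace 𝕜 Y]
    {P : Y →L[𝕜] Y} (hP : ‖P‖ ≤ 1 / 2) (y : Y) : ∃ z, z - P z = y ∧ ‖z - y‖ ≤ 2 * ‖P y‖ := by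
  let u := Units.oneSub P (hP.trans_lt one_half_lt_one)
  have hz : (↑u⁻¹ : Y →L[𝕜] Y) y - P ((↑u⁻¹ : Y →L[𝕜] Y) y) = y :=
    congrArg (· y) u.mul_inv
  refine ⟨_, hz, ?_⟩
  set z := (↑u⁻¹ : Y →L[𝕜] Y) y
  have hsplit : z - y = P y + P (z - y) := by
    rw [← map_add, add_sub_cancel]
    exact sub_eq_of_eq_add' (sub_eq_iff_eq_add.1 hz)
  have hle : ‖z - y‖ ≤ ‖P y‖ + 1 / 2 * ‖z - y‖ := calc
    ‖z - y‖ ≤ ‖P y‖ + ‖P (z - y)‖ := by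
      nth_rewrite 1 [hsplit]
      exact norm_add_le _ _
    _ ≤ ‖P y‖ + 1 / 2 * ‖z - y‖ := by gcongr; exact P.le_of_opNorm_le hP _
  linarith

theorem exists_norm_mul_le_half_and_norm_one_sub_lt_one (𝕜 : Type*) [RCLike 𝕜] {K : ℝ}
    (hK : 1 ≤ K) : ∃ c : 𝕜, ‖c‖ * K ≤ 1 / 2 ∧ ‖1 - c‖ < 1 ∧ 1 - c ≠ 0 := by
  have hlt : (2 * K)⁻¹ < 1 := inv_lt_one_of_one_lt₀ (by linarith)
  have hnorm : ‖(1 - ((2 * K)⁻¹ : ℝ) : 𝕜)‖ = 1 - (2 * K)⁻¹ := by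
    rw [← RCLike.ofReal_one, ← RCLike.ofReal_sub, RCLike.norm_of_nonneg (by linarith)]
  refine ⟨((2 * K)⁻¹ : ℝ), ?_, ?_, norm_pos_iff.1 ?_⟩
  · rw [RCLike.norm_of_nonneg (by positivity)]
    field_simp
    rfl
  · rw [hnorm]
    linarith [inv_pos.2 (show 0 < 2 * K by linarith)]
  · rw [hnorm]
    linarith

variable [RCLike 𝕜] [NonUnitalSeminormedRing A] [NormedSpace 𝕜 A] [NormedSpace 𝕜 Y]
  {L : A →L[𝕜] Y →L[𝕜] Y} {l : Filter A} [l.NeBot]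

/-- In the unitization, `y` is replaced by `(1 - c + c e)⁻¹ y`, for an element `e` deep in the
approximate identity. -/
theorem exists_cohen_step (hL : ∀ a b, L (a * b) = (L a).comp (L b))
    (hla : ∀ a, Tendsto (a * ·) l (𝓝 a)) (hly : ∀ y, Tendsto (L · y) l (𝓝 y))
    {C : ℝ} (hC : ∀ᶠ e in l, ‖e‖ ≤ C) {c : 𝕜} (hc : ‖c‖ * (1 + C + ‖L‖ * C) ≤ 1 / 2)
    {t : 𝕜} (ht : t ≠ 0) (a : A) (y : Y) :
    ∃ a' y', (t * (1 - c)) • y' + L a' y' = t • y + L a y ∧ ‖a' - a‖ ≤ ‖t‖ ∧ ‖y' - y‖ ≤ ‖t‖ := by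
  obtain ⟨e, heC, hea, hey⟩ := (hC.and <|
    (Metric.tendsto_nhds.1 (hla a) ‖t‖ (norm_pos_iff.2 ht)).and
      (Metric.tendsto_nhds.1 (hly y) ‖t‖ (norm_pos_iff.2 ht))).exists
  rw [dist_eq_norm] at hea hey
  have hC0 : 0 ≤ C := (norm_nonneg e).trans heC
  have hc1 : ‖c‖ * (1 + C) ≤ 1 / 2 :=
    (mul_le_mul_of_nonneg_left (by nlinarith [norm_nonneg L]) (norm_nonneg c)).trans hc
  have hcL : ‖c‖ * (1 + ‖L‖ * C) ≤ 1 / 2 :=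
    (mul_le_mul_of_nonneg_left (by linarith) (norm_nonneg c)).trans hc
  have hc2 : ‖c‖ ≤ 1 / 2 := (le_mul_of_one_le_right (norm_nonneg c) (by linarith)).trans hc1
  let P : Y →L[𝕜] Y := c • (1 - L e)
  have hP : ‖P‖ ≤ 1 / 2 := calc
    ‖P‖ ≤ ‖c‖ * (‖(1 : Y →L[𝕜] Y)‖ + ‖L e‖) := by rw [norm_smul]; gcongr; exact norm_sub_le _ _
    _ ≤ ‖c‖ * (1 + ‖L‖ * C) := by
      gcongr
      · exact ContinuousLinearMap.norm_id_le
      · exact L.le_opNorm_of_le heC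
    _ ≤ 1 / 2 := hcL
  obtain ⟨y', hy', hdist⟩ := exists_sub_apply_eq_of_norm_le_half hP y
  refine ⟨a + c • (a * e - a) + (t * c) • e, y', ?_, ?_, ?_⟩
  · simp only [P, ← hy', smul_apply, sub_apply, one_apply_eq_self, map_add, map_sub, map_smul,
      add_apply, hL, ContinuousLinearMap.comp_apply]
    module
  · calc ‖a + c • (a * e - a) + (t * c) • e - a‖ = ‖c • (a * e - a) + (t * c) • e‖ := by
          congr 1; abel
      _ ≤ ‖c‖ * ‖t‖ + ‖t‖ * ‖c‖ * C := by
          refine norm_add_le_of_le ?_ ?_ <;> simp only [norm_smul, norm_mul] <;> gcongr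
      _ = ‖t‖ * (‖c‖ * (1 + C)) := by ring
      _ ≤ ‖t‖ := mul_le_of_le_one_right (norm_nonneg t) (by linarith)
  · calc ‖y' - y‖ ≤ 2 * ‖P y‖ := hdist
      _ = 2 * (‖c‖ * ‖L e y - y‖) := by simp [P, norm_smul, norm_sub_rev]
      _ ≤ 2 * (1 / 2 * ‖t‖) := by gcongr
      _ = ‖t‖ := by ring

/-- **Cohen's factorization theorem** for nondegenerate Banach modules. -/
theorem exists_apply_eq_of_bounded_approximateUnit [CompleteSpace A]
    (hL : ∀ a b, L (a * b) = (L a).comp (L b)) (hl : l.IsBoundedUnder (· ≤ ·) norm)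
    (hla : ∀ a, Tendsto (a * ·) l (𝓝 a)) (hly : ∀ y, Tendsto (L · y) l (𝓝 y)) (x : Y) :
    ∃ a y, L a y = x := by
  obtain ⟨C, hC⟩ := hl
  have hC : ∀ᶠ e in l, ‖e‖ ≤ C := hC
  have hC0 : 0 ≤ C := hC.exists.elim fun e he => (norm_nonneg e).trans he
  obtain ⟨c, hc, hlt, hne⟩ := exists_norm_mul_le_half_and_norm_one_sub_lt_one 𝕜
    (K := 1 + C + ‖L‖ * C) (by nlinarith [norm_nonneg L])
  choose a' y' hfactor ha' hy' using
    fun (n : ℕ) (p : A × Y) => exists_cohen_step hL hla hly hC hc (pow_ne_zero n hne) p.1 p.2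
  let p : ℕ → A × Y := fun n => n.rec (0, x) fun n p => (a' n p, y' n p)
  have hinv : ∀ n, (1 - c) ^ n • (p n).2 + L (p n).1 (p n).2 = x := by
    intro n
    induction n with
    | zero => simp [p]
    | succ n ih => rw [pow_succ]; exact (hfactor n (p n)).trans ih
  have hp : CauchySeq p := cauchySeq_of_le_geometric (C := 1) _ hlt fun n => by
    rw [dist_comm, one_mul, dist_eq_norm, ← norm_pow]
    exact max_le (ha' n (p n)) (hy' n (p n))
  obtain ⟨⟨a, y⟩, hlim⟩ := cauchySeq_tendsto_of_complete hp
  have hay : Tendsto (fun n => (1 - c) ^ n • (p n).2 + L (p n).1 (p n).2) atTop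
      (𝓝 ((0 : 𝕜) • y + L a y)) :=
    ((tendsto_pow_atTop_nhds_zero_of_norm_lt_one hlt).smul hlim.snd_nhds).add
      ((L.isBoundedBilinearMap.continuous.tendsto (a, y)).comp hlim)
  simp only [hinv, zero_smul, zero_add] at hay
  exact ⟨a, y, tendsto_nhds_unique hay tendsto_const_nhds⟩

end CohenFactorization

section ProjectiveSeminorm

variable {V W : Type} [SeminormedAddCommGroup V] [NormedSpace ℂ V] [SeminormedAddCommGroup W]
  [NormedSpace ℂ W]

theorem exists_list_sum_tmul_eq (t : V ⊗[ℂ] W) :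
    ∃ L : List (V × W), t = (L.map fun p => p.1 ⊗ₜ[ℂ] p.2).sum := by
  induction t with
  | zero => exact ⟨[], rfl⟩
  | tmul v w => exact ⟨[(v, w)], by simp⟩
  | add s t hs ht =>
    obtain ⟨L, rfl⟩ := hs
    obtain ⟨L', rfl⟩ := ht
    exact ⟨L ++ L', by simp⟩

theorem projTensorSN_sum_le (L : List (V × W)) :
    projTensorSN (‖·‖) (‖·‖) (L.map fun p => p.1 ⊗ₜ[ℂ] p.2).sum ≤
      (L.map fun p => ‖p.1‖ * ‖p.2‖).sum := by
  refine csInf_le ⟨0, ?_⟩ ⟨L, rfl, rfl⟩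
  rintro _ ⟨L', -, rfl⟩
  exact List.sum_nonneg (fun r hr => by
    obtain ⟨p, -, rfl⟩ := List.mem_map.1 hr
    positivity)

theorem le_mul_projTensorSN {K r : ℝ} (hK : 0 ≤ K) {t : V ⊗[ℂ] W}
    (h : ∀ L : List (V × W), t = (L.map fun p => p.1 ⊗ₜ[ℂ] p.2).sum →
      r ≤ K * (L.map fun p => ‖p.1‖ * ‖p.2‖).sum) :
    r ≤ K * projTensorSN (‖·‖) (‖·‖) t := by
  obtain ⟨L₀, hL₀⟩ := exists_list_sum_tmul_eq t
  rw [projTensorSN, ← smul_eq_mul, ← Real.sInf_smul_of_nonneg hK]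
  refine le_csInf (Set.Nonempty.smul_set ⟨_, L₀, hL₀, rfl⟩) ?_
  rintro _ ⟨_, ⟨L, hL, rfl⟩, rfl⟩
  exact h L hL

theorem projTensorSN_add_le (s t : V ⊗[ℂ] W) :
    projTensorSN (‖·‖) (‖·‖) (s + t) ≤
      projTensorSN (‖·‖) (‖·‖) s + projTensorSN (‖·‖) (‖·‖) t := by
  rw [← sub_le_iff_le_add', ← one_mul (projTensorSN _ _ t)]
  refine le_mul_projTensorSN zero_le_one fun L' hL' => ?_
  rw [sub_le_comm, ← one_mul (projTensorSN _ _ s)]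
  refine le_mul_projTensorSN zero_le_one fun L hL => ?_
  simpa [hL, hL', add_comm] using projTensorSN_sum_le (L ++ L')

theorem projTensorSN_smul_le (c : ℂ) (t : V ⊗[ℂ] W) :
    projTensorSN (‖·‖) (‖·‖) (c • t) ≤ ‖c‖ * projTensorSN (‖·‖) (‖·‖) t := by
  refine le_mul_projTensorSN (norm_nonneg c) fun L hL => ?_
  have := projTensorSN_sum_le (L.map fun p => (c • p.1, p.2))
  simpa [hL, Function.comp_def, List.smul_sum, TensorProduct.smul_tmul', norm_smul, mul_assoc,
    List.sum_map_mul_left] using this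

variable (V W) in
/-- The projective seminorm on `V ⊗ W`, bundled from `projTensorSN`. -/
def projectiveSeminorm : Seminorm ℂ (V ⊗[ℂ] W) :=
  .ofSMulLE (projTensorSN (‖·‖) (‖·‖))
    (le_antisymm (by simpa using projTensorSN_sum_le ([] : List (V × W)))
      (by simpa using projTensorSN_add_le (0 : V ⊗[ℂ] W) 0))
    projTensorSN_add_le projTensorSN_smul_le

/-- `V ⊗ W` as a seminormed group under the projective seminorm. It is only a local instance,
since the tensor product carries no canonical norm. -/
abbrev projectiveSeminormedAddCommGroup : SeminormedAddCommGroup (V ⊗[ℂ] W) :=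
  (projectiveSeminorm V W).toAddGroupSeminorm.toSeminormedAddCommGroup

attribute [local instance] projectiveSeminormedAddCommGroup

/-- The normed space structure on `V ⊗ W` given by the projective seminorm. -/
abbrev projectiveNormedSpace : NormedSpace ℂ (V ⊗[ℂ] W) where
  __ := (inferInstance : Module ℂ (V ⊗[ℂ] W))
  norm_smul_le := projTensorSN_smul_le

attribute [local instance] projectiveNormedSpace

theorem norm_tmul_le (v : V) (w : W) : ‖v ⊗ₜ[ℂ] w‖ ≤ ‖v‖ * ‖w‖ :=
  (projTensorSN_sum_le [(v, w)]).trans_eq (by simp)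

theorem norm_apply_le_of_forall_tmul {Y : Type*} [SeminormedAddCommGroup Y] [Module ℂ Y]
    (Φ : V ⊗[ℂ] W →ₗ[ℂ] Y) {K : ℝ} (hK : 0 ≤ K)
    (h : ∀ v w, ‖Φ (v ⊗ₜ w)‖ ≤ K * (‖v‖ * ‖w‖)) (t : V ⊗[ℂ] W) : ‖Φ t‖ ≤ K * ‖t‖ := by
  refine le_mul_projTensorSN hK fun L hL => ?_
  subst hL
  induction L with
  | nil => simp
  | cons p L ih =>
    simp only [List.map_cons, List.sum_cons, map_add, mul_add]
    exact norm_add_le_of_le (h _ _) ih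

variable (V W) in
/-- The canonical map `(v, w) ↦ v ⊗ w` as a continuous bilinear map. -/
def tmulCLM : V →L[ℂ] W →L[ℂ] V ⊗[ℂ] W :=
  (TensorProduct.mk ℂ V W).mkContinuous₂ 1 fun v w => by
    simpa using norm_tmul_le v w

@[simp] theorem tmulCLM_apply (v : V) (w : W) : tmulCLM V W v w = v ⊗ₜ w := rfl

variable {Y : Type*} [SeminormedAddCommGroup Y] [NormedSpace ℂ Y]

/-- The universal property of the projective tensor product: a continuous bilinear map induces a
continuous linear map. -/
def projectiveLift (B : V →L[ℂ] W →L[ℂ] Y) : V ⊗[ℂ] W →L[ℂ] Y :=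
  (TensorProduct.lift B.toLinearMap₁₂).mkContinuous ‖B‖ <|
    norm_apply_le_of_forall_tmul _ (norm_nonneg B) fun v w => by
      simpa [mul_assoc] using B.le_opNorm₂ v w

end ProjectiveSeminorm

theorem norm_liftQL_le {𝕜 X Y : Type*} [NontriviallyNormedField 𝕜] [SeminormedAddCommGroup X]
    [NormedSpace 𝕜 X] [SeminormedAddCommGroup Y] [NormedSpace 𝕜 Y] (S : Submodule 𝕜 X)
    (f : X →L[𝕜] Y) (hf : S ≤ f.ker) : ‖S.liftQL f hf‖ ≤ ‖f‖ := by
  let g : NormedAddGroupHom X Y :=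
    f.toLinearMap.toAddMonoidHom.mkNormedAddGroupHom ‖f‖ f.le_opNorm
  have hg : ‖g‖ ≤ ‖f‖ := AddMonoidHom.mkNormedAddGroupHom_norm_le _ (norm_nonneg f) _
  refine ContinuousLinearMap.opNorm_le_bound _ (norm_nonneg f) fun q => ?_
  exact (QuotientAddGroup.norm_lift_apply_le (S := S.toAddSubgroup) g hf q).trans
    (mul_le_mul_of_nonneg_right hg (norm_nonneg q))

theorem quotient_clm_ext {𝕜 X Y : Type*} [Ring 𝕜] [TopologicalSpace X] [AddCommGroup X] [Module 𝕜 X]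
    [TopologicalSpace Y] [AddCommGroup Y] [Module 𝕜 Y] {S : Submodule 𝕜 X} {f g : X ⧸ S →L[𝕜] Y}
    (h : ∀ x, f (S.mkQ x) = g (S.mkQ x)) : f = g :=
  ContinuousLinearMap.ext (S.mkQ_surjective.forall.2 h)

theorem isClosed_setOf_tendsto_apply_self {𝕜 ι X : Type*} [NontriviallyNormedField 𝕜]
    [SeminormedAddCommGroup X] [NormedSpace 𝕜 X] {T : ι → X →L[𝕜] X} {l : Filter ι} {K : ℝ}
    (hT : ∀ᶠ i in l, ‖T i‖ ≤ K) : IsClosed {x | Tendsto (T · x) l (𝓝 x)} := by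
  have hbound : ∃ C, ∀ i : {i | ‖T i‖ ≤ K}, ‖T i‖ ≤ C := ⟨K, fun i => i.2⟩
  have hequi : Equicontinuous fun (i : {i | ‖T i‖ ≤ K}) x => T i x :=
    ((NormedSpace.equicontinuous_TFAE fun i : {i | ‖T i‖ ≤ K} => T i).out 5 1).1 hbound
  convert hequi.isClosed_setOfPred_tendsto (l := comap Subtype.val l) continuous_id using 3 with x
  exact (tendsto_comap'_iff (m := (T · x)) (by rwa [Subtype.range_coe])).symm

theorem HasBoundedApproxIdentity.exists_isApproximateUnit {A : Type} [NonUnitalNormedRing A]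
    (h : HasBoundedApproxIdentity A) :
    ∃ l : Filter A, l.IsApproximateUnit ∧ l.IsBoundedUnder (· ≤ ·) norm := by
  obtain ⟨ι, φ, e, hφ, ⟨C, hC⟩, he⟩ := h
  exact ⟨φ.map e, ⟨fun a => (he a).2, fun a => (he a).1⟩,
    isBoundedUnder_map_iff.2 (isBoundedUnder_of ⟨C, hC⟩)⟩

variable {A : Type} [NonUnitalNormedRing A] [NormedSpace ℂ A]

namespace BanachBimod

variable {X : Type} [NormedAddCommGroup X] [NormedSpace ℂ X] (M : BanachBimod A X)

/-- The left action of a Banach bimodule as a continuous linear map. -/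
def lCLM : A →L[ℂ] X →L[ℂ] X :=
  LinearMap.mkContinuousOfExistsBound ⟨⟨M.l, M.l_add⟩, M.l_smul⟩ M.l_bound

/-- The right action of a Banach bimodule as a continuous linear map. -/
def rCLM : A →L[ℂ] X →L[ℂ] X :=
  LinearMap.mkContinuousOfExistsBound ⟨⟨M.r, M.r_add⟩, M.r_smul⟩ M.r_bound

@[simp] theorem lCLM_apply (a : A) : M.lCLM a = M.l a := rfl

@[simp] theorem dual_l_apply (a : A) (φ : X →L[ℂ] ℂ) (x : X) :
    M.dual.l a φ x = φ (M.r a x) := rfl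

@[simp] theorem dual_r_apply (a : A) (φ : X →L[ℂ] ℂ) (x : X) :
    M.dual.r a φ x = φ (M.l a x) := rfl

theorem l_mul_apply (a b : A) (x : X) : M.l (a * b) x = M.l a (M.l b x) := by
  rw [M.l_mul, ContinuousLinearMap.comp_apply]

theorem r_mul_apply (a b : A) (x : X) : M.r (a * b) x = M.r b (M.r a x) := by
  rw [M.r_mul, ContinuousLinearMap.comp_apply]

theorem l_r_apply_comm (a b : A) (x : X) : M.l a (M.r b x) = M.r b (M.l a x) :=
  congrArg (· x) (M.lr_comm a b)

/-- A Banach `A`-bimodule seen as a bimodule over the opposite algebra, with the two actions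
exchanged. -/
def op : BanachBimod Aᵐᵒᵖ X where
  l a := M.r a.unop
  r a := M.l a.unop
  l_add _ _ := M.r_add _ _
  l_smul _ _ := M.r_smul _ _
  r_add _ _ := M.l_add _ _
  r_smul _ _ := M.l_smul _ _
  l_bound := M.r_bound.imp fun _ h a => h a.unop
  r_bound := M.l_bound.imp fun _ h a => h a.unop
  l_mul _ _ := M.r_mul _ _
  r_mul _ _ := M.l_mul _ _
  lr_comm _ _ := (M.lr_comm _ _).symm

/-- The restriction of the actions of a Banach bimodule to an invariant subspace. -/
def restrict (S : Submodule ℂ X) (hl : ∀ a, ∀ x ∈ S, M.l a x ∈ S)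
    (hr : ∀ a, ∀ x ∈ S, M.r a x ∈ S) : BanachBimod A S where
  l a := (M.l a).restrict (hl a)
  r a := (M.r a).restrict (hr a)
  l_add a b := by ext; simp [M.l_add]
  l_smul c a := by ext; simp [M.l_smul]
  r_add a b := by ext; simp [M.r_add]
  r_smul c a := by ext; simp [M.r_smul]
  l_bound := M.l_bound.imp fun C h a =>
    (((M.l a).restrict (hl a)).opNorm_le_bound (norm_nonneg (M.l a))
      fun x => (M.l a).le_opNorm x).trans (h a)
  r_bound := M.r_bound.imp fun C h a =>
    (((M.r a).restrict (hr a)).opNorm_le_bound (norm_nonneg (M.r a))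
      fun x => (M.r a).le_opNorm x).trans (h a)
  l_mul a b := by ext; simp [M.l_mul]
  r_mul a b := by ext; simp [M.r_mul]
  lr_comm a b := by ext x; exact M.l_r_apply_comm a b x

theorem norm_liftQL_mkQL_comp_le {S : Submodule ℂ X} (T : X →L[ℂ] X)
    (hT : S ≤ (S.mkQL.comp T).ker) : ‖S.liftQL (S.mkQL.comp T) hT‖ ≤ ‖T‖ :=
  (norm_liftQL_le S _ hT).trans <| ContinuousLinearMap.opNorm_le_bound _ (norm_nonneg T) fun x =>
    (Submodule.Quotient.norm_mk_le S (T x)).trans (T.le_opNorm x)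

/-- The quotient of a Banach bimodule by a closed invariant subspace. -/
def quotient (S : Submodule ℂ X) [IsClosed (S : Set X)] (hl : ∀ a, ∀ x ∈ S, M.l a x ∈ S)
    (hr : ∀ a, ∀ x ∈ S, M.r a x ∈ S) : BanachBimod A (X ⧸ S) where
  l a := S.liftQL (S.mkQL.comp (M.l a)) fun x hx => by simpa using hl a x hx
  r a := S.liftQL (S.mkQL.comp (M.r a)) fun x hx => by simpa using hr a x hx
  l_add a b := quotient_clm_ext fun x => by simp [M.l_add]
  l_smul c a := quotient_clm_ext fun x => by simp [M.l_smul]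
  r_add a b := quotient_clm_ext fun x => by simp [M.r_add]
  r_smul c a := quotient_clm_ext fun x => by simp [M.r_smul]
  l_bound := M.l_bound.imp fun C h a => (norm_liftQL_mkQL_comp_le _ _).trans (h a)
  r_bound := M.r_bound.imp fun C h a => (norm_liftQL_mkQL_comp_le _ _).trans (h a)
  l_mul a b := quotient_clm_ext fun x => by simp [M.l_mul]
  r_mul a b := quotient_clm_ext fun x => by simp [M.r_mul]
  lr_comm a b := quotient_clm_ext fun x => by simp [M.l_r_apply_comm]

@[simp] theorem quotient_l_mkQ (S : Submodule ℂ X) [IsClosed (S : Set X)]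
    (hl : ∀ a, ∀ x ∈ S, M.l a x ∈ S) (hr : ∀ a, ∀ x ∈ S, M.r a x ∈ S) (a : A) (x : X) :
    (M.quotient S hl hr).l a (S.mkQ x) = S.mkQ (M.l a x) := rfl

@[simp] theorem quotient_r_mkQ (S : Submodule ℂ X) [IsClosed (S : Set X)]
    (hl : ∀ a, ∀ x ∈ S, M.l a x ∈ S) (hr : ∀ a, ∀ x ∈ S, M.r a x ∈ S) (a : A) (x : X) :
    (M.quotient S hl hr).r a (S.mkQ x) = S.mkQ (M.r a x) := rfl

/-- The inner derivation `a ↦ a · x - x · a`. -/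
def ad (x : X) : A →L[ℂ] X := M.lCLM.flip x - M.rCLM.flip x

theorem ad_apply (x : X) (a : A) : M.ad x a = M.l a x - M.r a x := rfl

theorem isDerivation_ad (x : X) : M.IsDerivation (M.ad x) := fun a b => by
  simp only [ad_apply, l_mul_apply, r_mul_apply, map_sub, l_r_apply_comm]
  abel

/-- The factorization through `X ⧸ S` of a family of functionals on `X` vanishing on `S`. -/
def liftQuotient (S : Submodule ℂ X) (D : A →L[ℂ] X →L[ℂ] ℂ) (hD : ∀ a, S ≤ (D a).ker) :
    A →L[ℂ] X ⧸ S →L[ℂ] ℂ :=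
  LinearMap.mkContinuous
    { toFun := fun a => S.liftQL (D a) (hD a)
      map_add' := fun a b => quotient_clm_ext fun x => by simp
      map_smul' := fun c a => quotient_clm_ext fun x => by simp }
    ‖D‖ fun a => (norm_liftQL_le S (D a) (hD a)).trans (D.le_opNorm a)

theorem IsDerivation.liftQuotient {S : Submodule ℂ X} [IsClosed (S : Set X)]
    (hl : ∀ a, ∀ x ∈ S, M.l a x ∈ S) (hr : ∀ a, ∀ x ∈ S, M.r a x ∈ S) {D : A →L[ℂ] X →L[ℂ] ℂ}
    (h : M.dual.IsDerivation D) (hD : ∀ a, S ≤ (D a).ker) :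
    (M.quotient S hl hr).dual.IsDerivation (liftQuotient S D hD) :=
  fun a b => quotient_clm_ext fun x => congrArg (· x) (h a b)

variable {l : Filter A}

theorem tendsto_l_l_apply (hl : l.IsApproximateUnit) (a : A) (x : X) :
    Tendsto (fun e => M.l e (M.l a x)) l (𝓝 (M.l a x)) := by
  simp only [← l_mul_apply]
  exact ((M.lCLM.flip x).continuous.tendsto a).comp (hl.tendsto_mul_right a)

theorem tendsto_r_r_apply (hl : l.IsApproximateUnit) (a : A) (x : X) :
    Tendsto (fun e => M.r e (M.r a x)) l (𝓝 (M.r a x)) := by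
  simp only [← r_mul_apply]
  exact ((M.rCLM.flip x).continuous.tendsto a).comp (hl.tendsto_mul_left a)

variable (l) in
/-- The essential part of a Banach bimodule with respect to an approximate unit `l` of the algebra:
the vectors on which `l` acts as an approximate identity from both sides. -/
def essential : Submodule ℂ X where
  carrier := {x | Tendsto (M.l · x) l (𝓝 x)} ∩ {x | Tendsto (M.r · x) l (𝓝 x)}
  zero_mem' := by simp [tendsto_const_nhds]
  add_mem' hx hy := by simpa using ⟨hx.1.add hy.1, hx.2.add hy.2⟩
  smul_mem' c _ hx := by simpa using ⟨hx.1.const_smul c, hx.2.const_smul c⟩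

theorem sum_l_mem_essential (hl : l.IsApproximateUnit) {F : Finset A} {x : A → X}
    (h : ∑ a ∈ F, M.l a (x a) = ∑ a ∈ F, M.r a (x a)) :
    ∑ a ∈ F, M.l a (x a) ∈ M.essential l := by
  refine ⟨?_, h ▸ ?_⟩ <;> simp only [Set.mem_ofPred_eq, map_sum]
  · exact tendsto_finsetSum F fun a _ => M.tendsto_l_l_apply hl a (x a)
  · exact tendsto_finsetSum F fun a _ => M.tendsto_r_r_apply hl a (x a)

theorem l_mem_essential (hl : l.IsApproximateUnit) (a : A) {x : X} (hx : x ∈ M.essential l) :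
    M.l a x ∈ M.essential l := by
  refine ⟨M.tendsto_l_l_apply hl a x, ?_⟩
  simpa only [Set.mem_ofPred_eq, Function.comp_def, l_r_apply_comm] using
    ((M.l a).continuous.tendsto x).comp hx.2

theorem r_mem_essential (hl : l.IsApproximateUnit) (a : A) {x : X} (hx : x ∈ M.essential l) :
    M.r a x ∈ M.essential l := by
  refine ⟨?_, M.tendsto_r_r_apply hl a x⟩
  simpa only [Set.mem_ofPred_eq, Function.comp_def, ← l_r_apply_comm] using
    ((M.r a).continuous.tendsto x).comp hx.1

theorem isClosed_essential (hbdd : l.IsBoundedUnder (· ≤ ·) norm) :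
    IsClosed (M.essential l : Set X) := by
  obtain ⟨C, hC⟩ := hbdd
  have hC : ∀ᶠ e in l, ‖e‖ ≤ C := hC
  exact (isClosed_setOf_tendsto_apply_self (hC.mono fun _ => M.lCLM.le_opNorm_of_le)).inter
    (isClosed_setOf_tendsto_apply_self (hC.mono fun _ => M.rCLM.le_opNorm_of_le))

theorem exists_l_r_apply_eq_of_mem_essential [CompleteSpace A] [CompleteSpace X]
    (hl : l.IsApproximateUnit) (hbdd : l.IsBoundedUnder (· ≤ ·) norm) {x : X}
    (hx : x ∈ M.essential l) : ∃ b c y, M.l b (M.r c y) = x := by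
  have := hl.neBot
  have : CompleteSpace (M.essential l) := (M.isClosed_essential hbdd).completeSpace_coe
  let N := M.restrict (M.essential l) (fun a _ => M.l_mem_essential hl a)
    (fun a _ => M.r_mem_essential hl a)
  obtain ⟨b, y, hby⟩ := exists_apply_eq_of_bounded_approximateUnit (L := N.lCLM) N.l_mul hbdd
    hl.tendsto_mul_left (fun y => tendsto_subtype_rng.2 y.2.1) ⟨x, hx⟩
  obtain ⟨c, z, hcz⟩ := exists_apply_eq_of_bounded_approximateUnit (L := N.op.lCLM)
    (l := l.map MulOpposite.op) N.op.l_mul hbdd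
    (fun a => (MulOpposite.continuous_op.tendsto _).comp (hl.tendsto_mul_right a.unop))
    (fun y => tendsto_subtype_rng.2 y.2.2) y
  exact ⟨b, c.unop, z, congrArg Subtype.val ((congrArg (N.l b) hcz).trans hby)⟩

end BanachBimod

namespace BanachBimod

variable [CompleteSpace A] {X : Type} [NormedAddCommGroup X] [NormedSpace ℂ X]
  {M : BanachBimod A X} {D : A →L[ℂ] X} {l : Filter A}

theorem IsDerivation.tendsto_apply_of_mem_essential_dual (hD : M.IsDerivation D)
    (hl : l.IsApproximateUnit) (hbdd : l.IsBoundedUnder (· ≤ ·) norm) {k : X →L[ℂ] ℂ}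
    (hk : k ∈ M.dual.essential l) {m : Filter A} (hm : m.IsApproximateUnit) :
    Tendsto (fun e => k (D e)) m (𝓝 0) := by
  obtain ⟨b, c, k, rfl⟩ := M.dual.exists_l_r_apply_eq_of_mem_essential hl hbdd hk
  have heq : ∀ e, M.l c (M.r b (D e)) = D (c * (e * b)) - M.l c (M.l e (D b)) - M.r (e * b) (D c) :=
    fun e => by rw [hD, hD e b, map_add]; abel
  have heb := hm.tendsto_mul_right b
  have hlim : Tendsto (fun e => M.l c (M.r b (D e))) m
      (𝓝 (D (c * b) - M.l c (D b) - M.r b (D c))) := by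
    simp only [heq, ← l_mul_apply]
    exact (((D.continuous.tendsto _).comp (heb.const_mul c)).sub
      (((M.lCLM.flip (D b)).continuous.tendsto c).comp (hm.tendsto_mul_left c))).sub
      (((M.rCLM.flip (D c)).continuous.tendsto b).comp heb)
  rw [hD c b, add_sub_cancel_left, sub_self] at hlim
  simpa [Function.comp_def] using (k.continuous.tendsto _).comp hlim

end BanachBimod

section ApproximateDiagonal

attribute [local instance] projectiveSeminormedAddCommGroup projectiveNormedSpace

@[simp] theorem tactL_tmul [SMulCommClass ℂ A A] (a x y : A) :
    tactL A a (x ⊗ₜ y) = (a * x) ⊗ₜ y := rfl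

@[simp] theorem tactR_tmul [IsScalarTower ℂ A A] (a x y : A) :
    tactR A a (x ⊗ₜ y) = x ⊗ₜ (y * a) := rfl

namespace BanachBimod

variable {X : Type} [NormedAddCommGroup X] [NormedSpace ℂ X] (M : BanachBimod A X) (D : A →L[ℂ] X)

/-- The map `x ⊗ y ↦ x · D y`, which carries approximate diagonals to approximate primitives of a
derivation `D`. -/
def primitive : A ⊗[ℂ] A →L[ℂ] X :=
  projectiveLift (((ContinuousLinearMap.compL ℂ A X X).flip D).comp M.lCLM)

@[simp] theorem primitive_tmul (x y : A) : M.primitive D (x ⊗ₜ y) = M.l x (D y) := rfl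

end BanachBimod

variable [IsScalarTower ℂ A A] [SMulCommClass ℂ A A]

variable (A) in
/-- A filter on `A ⊗ A` along which the identity map is an approximate diagonal. -/
structure IsApproximateDiagonal (φ : Filter (A ⊗[ℂ] A)) : Prop where
  tendsto_sub (a : A) : Tendsto (fun u => tactL A a u - tactR A a u) φ (𝓝 0)
  tendsto_mul (a : A) : Tendsto (fun u => tpi A u * a) φ (𝓝 a)
  neBot : φ.NeBot

variable (A) in
theorem pseudoAmenable_iff_exists_isApproximateDiagonal :
    PseudoAmenable A ↔ ∃ φ : Filter (A ⊗[ℂ] A), IsApproximateDiagonal A φ := by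
  constructor
  · rintro ⟨ι, φ, u, hφ, hu, hπ⟩
    exact ⟨φ.map u, fun a => tendsto_zero_iff_norm_tendsto_zero.2 (hu a),
      fun a => tendsto_iff_norm_sub_tendsto_zero.2 (hπ a), hφ.map u⟩
  · rintro ⟨φ, hφ⟩
    exact ⟨_, φ, id, hφ.neBot, fun a => tendsto_zero_iff_norm_tendsto_zero.1 (hφ.tendsto_sub a),
      fun a => tendsto_iff_norm_sub_tendsto_zero.1 (hφ.tendsto_mul a)⟩

theorem tpi_eq_projectiveLift (u : A ⊗[ℂ] A) :
    tpi A u = projectiveLift (ContinuousLinearMap.mul ℂ A) u := rfl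

@[simp] theorem tpi_tmul (x y : A) : tpi A (x ⊗ₜ y) = x * y := rfl

theorem tpi_tactL (a : A) (u : A ⊗[ℂ] A) : tpi A (tactL A a u) = a * tpi A u := by
  induction u with
  | zero => simp
  | tmul x y => simp [mul_assoc]
  | add u v hu hv => simp only [map_add, hu, hv, mul_add]

theorem tpi_tactR (a : A) (u : A ⊗[ℂ] A) : tpi A (tactR A a u) = tpi A u * a := by
  induction u with
  | zero => simp
  | tmul x y => simp [mul_assoc]
  | add u v hu hv => simp only [map_add, hu, hv, add_mul]

theorem IsApproximateDiagonal.isApproximateUnit_map_tpi {φ : Filter (A ⊗[ℂ] A)}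
    (hφ : IsApproximateDiagonal A φ) : (φ.map (tpi A)).IsApproximateUnit where
  tendsto_mul_left a := by
    have hcomm : Tendsto (fun u => a * tpi A u - tpi A u * a) φ (𝓝 0) := by
      simpa [Function.comp_def, ← tpi_eq_projectiveLift, tpi_tactL, tpi_tactR] using
        ((projectiveLift (ContinuousLinearMap.mul ℂ A)).continuous.tendsto 0).comp
          (hφ.tendsto_sub a)
    simpa [Function.comp_def] using hcomm.add (hφ.tendsto_mul a)
  tendsto_mul_right a := hφ.tendsto_mul a
  neBot := hφ.neBot.map _

namespace BanachBimod

variable {X : Type} [NormedAddCommGroup X] [NormedSpace ℂ X] {M : BanachBimod A X}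
  {D : A →L[ℂ] X}

theorem IsDerivation.primitive_tactL_sub_tactR (hD : M.IsDerivation D) (a : A) (u : A ⊗[ℂ] A) :
    M.primitive D (tactL A a u - tactR A a u) =
      M.l a (M.primitive D u) - M.r a (M.primitive D u) - M.l (tpi A u) (D a) := by
  induction u with
  | zero => simp [← lCLM_apply]
  | tmul x y =>
    simp only [tactL_tmul, tactR_tmul, tpi_tmul, primitive_tmul, map_sub, map_add, hD y a,
      l_mul_apply, l_r_apply_comm]
    abel
  | add u v hu hv =>
    rw [map_add, map_add, add_sub_add_comm, map_add, hu, hv]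
    simp only [map_add, M.l_add, add_apply]
    abel

theorem IsDerivation.sum_apply_eq_zero [CompleteSpace A] (hD : M.IsDerivation D)
    {φ : Filter (A ⊗[ℂ] A)} (hφ : IsApproximateDiagonal A φ) {l : Filter A}
    (hl : l.IsApproximateUnit) (hbdd : l.IsBoundedUnder (· ≤ ·) norm) {F : Finset A}
    {f : A → X →L[ℂ] ℂ} (hf : ∀ x, ∑ a ∈ F, f a (M.l a x - M.r a x) = 0) :
    ∑ a ∈ F, f a (D a) = 0 := by
  have := hφ.neBot
  have hk : ∑ a ∈ F, M.dual.l a (f a) = ∑ a ∈ F, M.dual.r a (f a) := by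
    ext x
    have := hf x
    simp only [map_sub, Finset.sum_sub_distrib, sub_eq_zero] at this
    simpa [sum_apply] using this.symm
  have hkD : Tendsto (fun u => ∑ a ∈ F, f a (M.r a (D (tpi A u)))) φ (𝓝 0) := by
    simpa [sum_apply, Function.comp_def] using
      (hD.tendsto_apply_of_mem_essential_dual hl hbdd (M.dual.sum_l_mem_essential hl hk)
        hφ.isApproximateUnit_map_tpi).comp tendsto_map
  have hDπ : Tendsto (fun u => ∑ a ∈ F, f a (D (tpi A u * a))) φ (𝓝 (∑ a ∈ F, f a (D a))) :=
    tendsto_finsetSum F fun a _ => (((f a).comp D).continuous.tendsto a).comp (hφ.tendsto_mul a)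
  have hprim : Tendsto (fun u => ∑ a ∈ F, f a (M.primitive D (tactL A a u - tactR A a u))) φ
      (𝓝 0) := by
    simpa using tendsto_finsetSum F fun a _ =>
      (((f a).comp (M.primitive D)).continuous.tendsto 0).comp (hφ.tendsto_sub a)
  have hsum : ∀ u, ∑ a ∈ F, f a (M.primitive D (tactL A a u - tactR A a u)) =
      ∑ a ∈ F, f a (M.r a (D (tpi A u))) - ∑ a ∈ F, f a (D (tpi A u * a)) := by
    intro u
    simp only [hD.primitive_tactL_sub_tactR, map_sub, Finset.sum_sub_distrib, hD _ _, map_add,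
      Finset.sum_add_distrib]
    have := hf (M.primitive D u)
    simp only [map_sub, Finset.sum_sub_distrib] at this
    linear_combination this
  simp only [hsum] at hprim
  simpa using tendsto_nhds_unique hprim (hkD.sub hDπ)

theorem IsDerivation.approxInner [CompleteSpace A] (hD : M.IsDerivation D)
    {φ : Filter (A ⊗[ℂ] A)} (hφ : IsApproximateDiagonal A φ) {l : Filter A}
    (hl : l.IsApproximateUnit) (hbdd : l.IsBoundedUnder (· ≤ ·) norm) : M.ApproxInner D := by
  obtain ⟨ψ, hψ, hlim⟩ := exists_filter_tendsto_of_forall_dual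
    (fun a => (M.l a - M.r a).toLinearMap) D fun F f hf => hD.sum_apply_eq_zero hφ hl hbdd hf
  exact ⟨X, ψ, id, hψ, hlim⟩

end BanachBimod

end ApproximateDiagonal

/-- An inner derivation into the dual of `X ⧸ S` annihilates the sum, so that the derivation
`a ↦ a · E - E · a` into this dual does so as well. -/
theorem ApproximatelyAmenable.sum_apply_eq_zero (hA : ApproximatelyAmenable A) {X : Type}
    [NormedAddCommGroup X] [NormedSpace ℂ X] (M : BanachBimod A X) {S : Submodule ℂ X}
    (hS : IsClosed (S : Set X)) (hl : ∀ a, ∀ x ∈ S, M.l a x ∈ S) (hr : ∀ a, ∀ x ∈ S, M.r a x ∈ S)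
    {E : X →L[ℂ] ℂ} (hE : ∀ a, ∀ x ∈ S, E (M.l a x) = E (M.r a x)) {F : Finset A} {x : A → X}
    (hx : ∑ a ∈ F, (M.l a (x a) - M.r a (x a)) ∈ S) :
    ∑ a ∈ F, E (M.l a (x a) - M.r a (x a)) = 0 := by
  have hker : ∀ a, S ≤ (M.dual.ad E a).ker := fun a s hs => by
    simp [BanachBimod.ad_apply, hE a s hs]
  obtain ⟨ι, φ, ψ, hφ, hψ⟩ := hA _ _ _ (M.quotient S hl hr) _
    ((M.dual.isDerivation_ad E).liftQuotient M hl hr hker)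
  have hlim := tendsto_finsetSum F fun a _ =>
    ((ContinuousLinearMap.apply ℂ ℂ (S.mkQ (x a))).continuous.tendsto _).comp (hψ a)
  have hzero : ∀ i, ∑ a ∈ F, ((M.quotient S hl hr).dual.l a (ψ i) -
      (M.quotient S hl hr).dual.r a (ψ i)) (S.mkQ (x a)) = 0 := fun i => calc
    _ = -ψ i (S.mkQ (∑ a ∈ F, (M.l a (x a) - M.r a (x a)))) := by
      simp [-Submodule.mkQ_apply]
    _ = 0 := by rw [S.mkQ_apply, (Submodule.Quotient.mk_eq_zero S).2 hx, map_zero, neg_zero]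
  have hlim_eq : ∑ a ∈ F, (M.dual.ad E a) (x a) = 0 :=
    tendsto_nhds_unique hlim (tendsto_const_nhds.congr fun i => (hzero i).symm)
  rw [← neg_eq_zero, ← hlim_eq, ← Finset.sum_neg_distrib]
  exact Finset.sum_congr rfl fun a _ => by simp [BanachBimod.ad_apply]

section MixedUnit

theorem exists_ultrafilter_le_tendsto_bidual (𝕜 : Type*) [NontriviallyNormedField 𝕜]
    [ProperSpace 𝕜] {X : Type*} [SeminormedAddCommGroup X] [NormedSpace 𝕜 X] {l : Filter X}
    [l.NeBot] (hbdd : l.IsBoundedUnder (· ≤ ·) norm) :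
    ∃ (U : Ultrafilter X) (E : (X →L[𝕜] 𝕜) →L[𝕜] 𝕜), U ≤ l ∧
      ∀ f : X →L[𝕜] 𝕜, Tendsto f U (𝓝 (E f)) := by
  obtain ⟨C, hC⟩ := hbdd
  have hC : ∀ᶠ x in l, ‖x‖ ≤ C := hC
  let ev : X → WeakDual 𝕜 (X →L[𝕜] 𝕜) := fun x =>
    StrongDual.toWeakDual (NormedSpace.inclusionInDoubleDual 𝕜 X x)
  have hev : ∀ᶠ x in (Ultrafilter.of l : Filter X),
      ev x ∈ WeakDual.toStrongDual ⁻¹' Metric.closedBall 0 C := by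
    filter_upwards [Ultrafilter.of_le l hC] with x hx
    exact (dist_zero_right (NormedSpace.inclusionInDoubleDual 𝕜 X x)).trans_le
      ((NormedSpace.double_dual_bound 𝕜 X x).trans hx)
  obtain ⟨E, -, hE⟩ := (WeakDual.isCompact_closedBall (𝕜 := 𝕜) (E := X →L[𝕜] 𝕜) 0 C)
    |>.ultrafilter_le_nhds ((Ultrafilter.of l).map ev) (le_principal_iff.2 hev)
  exact ⟨.of l, WeakDual.toStrongDual E, Ultrafilter.of_le l, fun f =>
    ((WeakDual.eval_continuous f).tendsto E).comp hE⟩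

variable [IsScalarTower ℂ A A] [SMulCommClass ℂ A A]

/-- A mixed unit of the bidual `A**`: an element `E` with `a · E = a = E · a` for every `a`, where
`(a · E) h = E (h · a)` and `(E · a) h = E (a · h)`. -/
structure IsMixedUnit (E : (A →L[ℂ] ℂ) →L[ℂ] ℂ) : Prop where
  apply_comp_mul (h : A →L[ℂ] ℂ) (a : A) : E (h.comp (.mul ℂ A a)) = h a
  apply_comp_mul_flip (h : A →L[ℂ] ℂ) (a : A) :
    E (h.comp ((ContinuousLinearMap.mul ℂ A).flip a)) = h a

theorem exists_isMixedUnit {l : Filter A} (hl : l.IsApproximateUnit)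
    (hbdd : l.IsBoundedUnder (· ≤ ·) norm) : ∃ E : (A →L[ℂ] ℂ) →L[ℂ] ℂ, IsMixedUnit E := by
  have := hl.neBot
  obtain ⟨U, E, hU, hE⟩ := exists_ultrafilter_le_tendsto_bidual ℂ hbdd
  exact ⟨E, fun h a => tendsto_nhds_unique (hE _)
      ((h.continuous.tendsto a).comp ((hl.tendsto_mul_left a).mono_left hU)),
    fun h a => tendsto_nhds_unique (hE _)
      ((h.continuous.tendsto a).comp ((hl.tendsto_mul_right a).mono_left hU))⟩

end MixedUnit

section BilinearForms

variable (A) in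
/-- The bilinear forms that are balanced over `A`. -/
def balanced : Submodule ℂ (A →L[ℂ] A →L[ℂ] ℂ) where
  carrier := {f | ∀ x y z, f (x * y) z = f x (y * z)}
  zero_mem' := by simp
  add_mem' hf hg x y z := by simp [hf x y z, hg x y z]
  smul_mem' c f hf x y z := by simp [hf x y z]

theorem isClosed_balanced : IsClosed (balanced A : Set (A →L[ℂ] A →L[ℂ] ℂ)) := by
  simp only [balanced, Submodule.coe_set_mk, AddSubmonoid.coe_set_mk, AddSubsemigroup.coe_set_mk,
    Set.ofPred_forall]
  refine isClosed_iInter fun x => isClosed_iInter fun y => isClosed_iInter fun z => ?_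
  exact isClosed_eq (by fun_prop) (by fun_prop)

variable [IsScalarTower ℂ A A] [SMulCommClass ℂ A A]

variable (A) in
set_option maxSynthPendingDepth 3 in
/-- The bimodule of continuous bilinear forms on `A`, with `(a · f) x y = f x (y * a)` and
`(f · a) x y = f (a * x) y`; it is the dual of the bimodule `A ⊗ A`. -/
def bilinBimod : BanachBimod A (A →L[ℂ] A →L[ℂ] ℂ) where
  l a := ContinuousLinearMap.compL ℂ A (A →L[ℂ] ℂ) (A →L[ℂ] ℂ)
    ((ContinuousLinearMap.compL ℂ A A ℂ).flip ((ContinuousLinearMap.mul ℂ A).flip a))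
  r a := (ContinuousLinearMap.compL ℂ A A (A →L[ℂ] ℂ)).flip (.mul ℂ A a)
  l_add a b := by simp
  l_smul c a := by simp
  r_add a b := by simp
  r_smul c a := by simp
  l_bound :=
    let L := (ContinuousLinearMap.compL ℂ A (A →L[ℂ] ℂ) (A →L[ℂ] ℂ)).comp
      ((ContinuousLinearMap.compL ℂ A A ℂ).flip.comp (ContinuousLinearMap.mul ℂ A).flip)
    ⟨‖L‖, fun a => L.le_opNorm a⟩
  r_bound :=
    let R := (ContinuousLinearMap.compL ℂ A A (A →L[ℂ] ℂ)).flip.comp (.mul ℂ A)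
    ⟨‖R‖, fun a => R.le_opNorm a⟩
  l_mul a b := by ext; simp [mul_assoc]
  r_mul a b := by ext; simp [mul_assoc]
  lr_comm a b := by ext; simp

@[simp] theorem bilinBimod_l_apply (a : A) (f : A →L[ℂ] A →L[ℂ] ℂ) (x y : A) :
    (bilinBimod A).l a f x y = f x (y * a) := rfl

@[simp] theorem bilinBimod_r_apply (a : A) (f : A →L[ℂ] A →L[ℂ] ℂ) (x y : A) :
    (bilinBimod A).r a f x y = f (a * x) y := rfl

theorem bilinBimod_l_mem_balanced (a : A) (f) (hf : f ∈ balanced A) :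
    (bilinBimod A).l a f ∈ balanced A := fun x y z => by
  simp [hf x y, mul_assoc]

theorem bilinBimod_r_mem_balanced (a : A) (f) (hf : f ∈ balanced A) :
    (bilinBimod A).r a f ∈ balanced A := fun x y z => by
  simp [← hf (a * x) y, mul_assoc]

/-- The balanced form `(x, y) ↦ h (x * y)`. -/
def mulForm (h : A →L[ℂ] ℂ) : A →L[ℂ] A →L[ℂ] ℂ :=
  (ContinuousLinearMap.compL ℂ A A ℂ h).comp (.mul ℂ A)

@[simp] theorem mulForm_apply (h : A →L[ℂ] ℂ) (x y : A) : mulForm h x y = h (x * y) := rfl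

theorem mulForm_mem_balanced (h : A →L[ℂ] ℂ) : mulForm h ∈ balanced A := fun x y z =>
  congrArg h (mul_assoc x y z)

/-- The iterated extension `f ↦ E_x E_y (f x y)` of an element `E` of the bidual, that is,
evaluation at `E ⊗ E`. -/
def iteratedEval (E : (A →L[ℂ] ℂ) →L[ℂ] ℂ) : (A →L[ℂ] A →L[ℂ] ℂ) →L[ℂ] ℂ :=
  E.comp (ContinuousLinearMap.compL ℂ A (A →L[ℂ] ℂ) ℂ E)

namespace IsMixedUnit

variable {E : (A →L[ℂ] ℂ) →L[ℂ] ℂ} (hE : IsMixedUnit E)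
include hE

theorem comp_mulForm (h : A →L[ℂ] ℂ) : E.comp (mulForm h) = h := by
  ext a
  exact hE.apply_comp_mul h a

theorem iteratedEval_mulForm (h : A →L[ℂ] ℂ) : iteratedEval E (mulForm h) = E h :=
  congrArg E (hE.comp_mulForm h)

theorem iteratedEval_r {f : A →L[ℂ] A →L[ℂ] ℂ} (a : A) :
    iteratedEval E ((bilinBimod A).r a f) = E (f a) :=
  hE.apply_comp_mul (E.comp f) a

theorem iteratedEval_l {f : A →L[ℂ] A →L[ℂ] ℂ} (a : A) :
    iteratedEval E ((bilinBimod A).l a f) = E (f.flip a) := by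
  refine congrArg E (ContinuousLinearMap.ext fun x => ?_)
  exact hE.apply_comp_mul_flip (f x) a

theorem apply_flip_of_mem_balanced {f : A →L[ℂ] A →L[ℂ] ℂ} (hf : f ∈ balanced A) (a : A) :
    E (f.flip a) = E (f a) := by
  have hflip : f.flip a = (E.comp f).comp ((ContinuousLinearMap.mul ℂ A).flip a) := by
    ext x
    calc f x a = E ((f x).comp (.mul ℂ A a)) := (hE.apply_comp_mul (f x) a).symm
      _ = E (f (x * a)) := congrArg E (ContinuousLinearMap.ext fun y => (hf x a y).symm)
  rw [hflip, hE.apply_comp_mul_flip, ContinuousLinearMap.comp_apply]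

end IsMixedUnit

end BilinearForms

section ApproximateDiagonal

attribute [local instance] projectiveSeminormedAddCommGroup projectiveNormedSpace

variable [IsScalarTower ℂ A A] [SMulCommClass ℂ A A]

theorem ApproximatelyAmenable.sum_snd_eq_zero (hA : ApproximatelyAmenable A)
    {E : (A →L[ℂ] ℂ) →L[ℂ] ℂ} (hE : IsMixedUnit E) {F : Finset A}
    {Λ : A → (A ⊗[ℂ] A) × A →L[ℂ] ℂ}
    (hΛ : ∀ u, ∑ a ∈ F, Λ a (tactL A a u - tactR A a u, tpi A u * a) = 0) :
    ∑ a ∈ F, Λ a (0, a) = 0 := by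
  let P : A → A ⊗[ℂ] A →L[ℂ] ℂ := fun a => (Λ a).comp (.inl ℂ (A ⊗[ℂ] A) A)
  let Q : A → A →L[ℂ] ℂ := fun a => (Λ a).comp (.inr ℂ (A ⊗[ℂ] A) A)
  have hPQ : ∀ a u v, Λ a (u, v) = P a u + Q a v := fun a u v => by simp [P, Q, ← map_add]
  let f : A → A →L[ℂ] A →L[ℂ] ℂ := fun a =>
    (ContinuousLinearMap.compL ℂ A (A ⊗[ℂ] A) ℂ (P a)).comp (tmulCLM A A)
  let g : A → A →L[ℂ] ℂ := fun a => (Q a).comp ((ContinuousLinearMap.mul ℂ A).flip a)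
  have hfg : ∑ a ∈ F, ((bilinBimod A).l a (f a) - (bilinBimod A).r a (f a)) =
      ∑ a ∈ F, mulForm (g a) := by
    ext x y
    refine (sub_eq_zero.1 ?_).symm
    simp only [sum_apply, ← Finset.sum_sub_distrib]
    rw [← hΛ (x ⊗ₜ y)]
    refine Finset.sum_congr rfl fun a _ => ?_
    simp only [hPQ, f, g, bilinBimod_l_apply, bilinBimod_r_apply, mulForm_apply, sub_apply,
      ContinuousLinearMap.comp_apply, ContinuousLinearMap.compL_apply,
      ContinuousLinearMap.flip_apply, ContinuousLinearMap.mul_apply', tmulCLM_apply, map_sub,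
      tactL_tmul, tactR_tmul, tpi_tmul]
    ring
  have hmem : ∑ a ∈ F, mulForm (g a) ∈ balanced A :=
    sum_mem fun a _ => mulForm_mem_balanced (g a)
  calc ∑ a ∈ F, Λ a (0, a) = ∑ a ∈ F, iteratedEval E (mulForm (g a)) := by
        refine Finset.sum_congr rfl fun a _ => ?_
        rw [hE.iteratedEval_mulForm, hE.apply_comp_mul_flip, hPQ, map_zero, zero_add]
    _ = ∑ a ∈ F, iteratedEval E ((bilinBimod A).l a (f a) - (bilinBimod A).r a (f a)) := by
        rw [← map_sum, ← map_sum, hfg]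
    _ = 0 := hA.sum_apply_eq_zero (bilinBimod A) isClosed_balanced bilinBimod_l_mem_balanced
        bilinBimod_r_mem_balanced (fun a f hf => by
          rw [hE.iteratedEval_r, hE.iteratedEval_l, hE.apply_flip_of_mem_balanced hf])
        (hfg ▸ hmem)

theorem ApproximatelyAmenable.exists_isApproximateDiagonal (hA : ApproximatelyAmenable A)
    {l : Filter A} (hl : l.IsApproximateUnit) (hbdd : l.IsBoundedUnder (· ≤ ·) norm) :
    ∃ φ : Filter (A ⊗[ℂ] A), IsApproximateDiagonal A φ := by
  obtain ⟨E, hE⟩ := exists_isMixedUnit hl hbdd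
  obtain ⟨φ, hφ, hlim⟩ := exists_filter_tendsto_of_forall_dual (E := fun _ : A => (A ⊗[ℂ] A) × A)
    (fun a => (tactL A a - tactR A a).prod (LinearMap.mulRight ℂ a ∘ₗ tpi A)) (fun a => (0, a))
    fun F Λ hΛ => hA.sum_snd_eq_zero hE hΛ
  exact ⟨φ, fun a => (hlim a).fst_nhds, fun a => (hlim a).snd_nhds, hφ⟩

end ApproximateDiagonal

end

/-- A Banach algebra `A` with a bounded approximate identity is approximately
amenable if and only if it is pseudo-amenable. -/
theorem approxAmenable_iff_pseudoAmenable_of_bai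
    (A : Type) [NonUnitalNormedRing A] [NormedSpace ℂ A]
    [IsScalarTower ℂ A A] [SMulCommClass ℂ A A] [CompleteSpace A]
    (hbai : HasBoundedApproxIdentity A) :
    ApproximatelyAmenable A ↔ PseudoAmenable A := by
  obtain ⟨l, hl, hbdd⟩ := hbai.exists_isApproximateUnit
  rw [pseudoAmenable_iff_exists_isApproximateDiagonal]
  constructor
  · intro hA
    exact hA.exists_isApproximateDiagonal hl hbdd
  · rintro ⟨φ, hφ⟩ X _ _ M D hD
    exact hD.approxInner hφ hl hbdd
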